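/- An alternating 3-form φ on 𝔤 = sp(2,ℝ) satisfies (i) φ(x,·,·) = 0 whenever x ∈ span(f₈,f₉,f₁₀), and (ii) φ([z,x],y,w) + φ(x,[z,y],w) + φ(x,y,[z,w]) = 0 for all z ∈ span(f₈,f₉,f₁₀) and all x,y,w ∈ 𝔤, if and only if there exist real constants a, b, q, h, p such that φ = a(4f¹⁴⁷ + f²⁴⁶ + 2f³⁴⁵) + b(2f¹⁵⁶ + f²³⁶ − 4f¹³⁷) + q f¹³⁶ + h(f²⁵⁶ − 4f¹⁵⁷ − 2f²³⁷) + p f²⁵⁷. In particular, the space of such 3-forms is 5-dimensional. -/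

import Mathlib

/-!
STATEMENT 17 (Proposition 6 of the paper): an alternating 3-form φ on 𝔤 = sp(2,ℝ)
annihilates span(f₈,f₉,f₁₀) and is infinitesimally invariant along it iff it is of the
form φ = a(4f¹⁴⁷ + f²⁴⁶ + 2f³⁴⁵) + b(2f¹⁵⁶ + f²³⁶ − 4f¹³⁷) + q f¹³⁶
+ h(f²⁵⁶ − 4f¹⁵⁷ − 2f²³⁷) + p f²⁵⁷; the space of such 3-forms is 5-dimensional.
Here f₁=E₁, f₂=E₃, f₃=E₄, f₄=E₆−E₅, f₅=E₇, f₆=E₈, f₇=E₁₀, f₈=E₂, f₉=E₅+E₆, f₁₀=E₉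
(0-based `fSp i` = f_{i+1}), `ε` is the dual basis (f^I), and f^{μνρ} = f^μ∧f^ν∧f^ρ is
the wedge (shuffle-sum convention), so that f^{μνρ}(X,Y,Z) is the 3×3 determinant
`trip` below.
-/

noncomputable section
open Matrix

attribute [local instance 100] LieRing.ofAssociativeRing

/-- The matrix `J` defining `sp(2,ℝ)`. -/
def Jm : Matrix (Fin 4) (Fin 4) ℝ :=
  !![0, 0, 0, 1;
     0, 0, 1, 0;
     0, -1, 0, 0;
     -1, 0, 0, 0]

/-- The general element `E(a₁,…,a₁₀)` of `sp(2,ℝ)` (indices shifted: `a i` is `a_{i+1}`). -/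
def Emat (a : Fin 10 → ℝ) : Matrix (Fin 4) (Fin 4) ℝ :=
  !![a 4, a 6, a 8, 2 * a 9;
     -(a 3), a 5, a 7, a 8;
     a 1, a 2, -(a 5), -(a 6);
     -(2 * a 0), a 1, a 3, -(a 4)]

/-- The basis `E_{i+1} = E(0,…,1,…,0)` of `sp(2,ℝ)`. -/
def E (i : Fin 10) : Matrix (Fin 4) (Fin 4) ℝ := Emat (Pi.single i 1)

set_option maxHeartbeats 1000000 in
lemma Emat_rel (a : Fin 10 → ℝ) : (Emat a)ᵀ * Jm + Jm * Emat a = 0 := by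
  rw [Emat, Jm]
  ext i j
  fin_cases i <;> fin_cases j <;>
    simp [Matrix.mul_apply, Fin.sum_univ_four, Matrix.transpose_apply,
      Matrix.vecHead, Matrix.vecTail]

/-- `sp(2,ℝ)` as a Lie subalgebra of `gl(4,ℝ)` (with the commutator bracket). -/
def sp2 : LieSubalgebra ℝ (Matrix (Fin 4) (Fin 4) ℝ) where
  carrier := {X | Xᵀ * Jm + Jm * X = 0}
  zero_mem' := by simp
  add_mem' := by
    intro x y hx hy
    simp only [Set.mem_setOf_eq] at *
    rw [transpose_add, add_mul, mul_add]
    calc xᵀ * Jm + yᵀ * Jm + (Jm * x + Jm * y)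
        = (xᵀ * Jm + Jm * x) + (yᵀ * Jm + Jm * y) := by abel
      _ = 0 := by rw [hx, hy, add_zero]
  smul_mem' := by
    intro c x hx
    simp only [Set.mem_setOf_eq] at *
    rw [transpose_smul, smul_mul_assoc, mul_smul_comm, ← smul_add, hx, smul_zero]
  lie_mem' := by
    intro x y hx hy
    simp only [Set.mem_setOf_eq] at *
    have hx' : xᵀ * Jm = -(Jm * x) := eq_neg_of_add_eq_zero_left hx
    have hy' : yᵀ * Jm = -(Jm * y) := eq_neg_of_add_eq_zero_left hy
    have h1 : yᵀ * xᵀ * Jm = Jm * (y * x) := by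
      rw [mul_assoc, hx', mul_neg, ← mul_assoc, hy', neg_mul, neg_neg, mul_assoc]
    have h2 : xᵀ * yᵀ * Jm = Jm * (x * y) := by
      rw [mul_assoc, hy', mul_neg, ← mul_assoc, hx', neg_mul, neg_neg, mul_assoc]
    rw [Ring.lie_def, transpose_sub, transpose_mul, transpose_mul, sub_mul, mul_sub, h1, h2]
    abel

lemma E_mem (i : Fin 10) : E i ∈ sp2 := Emat_rel _

/-- The basis vectors `E_I` as elements of `sp(2,ℝ)`. -/
def Esp (i : Fin 10) : sp2 := ⟨E i, E_mem i⟩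

/-- The basis (f_I) (0-based) of sp(2,ℝ). -/
def fSp : Fin 10 → sp2 :=
  ![Esp 0, Esp 2, Esp 3, Esp 5 - Esp 4, Esp 6, Esp 7, Esp 9, Esp 1, Esp 4 + Esp 5, Esp 8]

/-- The wedge of three 1-forms (shuffle-sum convention), evaluated on a triple:
(α∧β∧γ)(X,Y,Z) = det of the matrix of evaluations. -/
def trip (α β γ : sp2 →ₗ[ℝ] ℝ) (X Y Z : sp2) : ℝ :=
  α X * (β Y * γ Z - β Z * γ Y) - α Y * (β X * γ Z - β Z * γ X)
    + α Z * (β X * γ Y - β Y * γ X)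

/-- span(f₈,f₉,f₁₀) = span(E₂, E₅+E₆, E₉), i.e. sl(2,ℝ)_s, inside the matrices. -/
def spanS : Submodule ℝ (Matrix (Fin 4) (Fin 4) ℝ) :=
  Submodule.span ℝ {E 1, E 4 + E 5, E 8}

/-- explicit coordinates with respect to `fSp` -/
def crd (M : Matrix (Fin 4) (Fin 4) ℝ) : Fin 10 → ℝ :=
  ![-(M 3 0) / 2, M 2 1, -(M 1 0), (M 1 1 - M 0 0) / 2, M 0 1, M 1 2, M 0 3 / 2,
    M 2 0, (M 0 0 + M 1 1) / 2, M 0 2]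

lemma sp2_rel (X : sp2) :
    X.1 1 3 = X.1 0 2 ∧ X.1 2 2 = -(X.1 1 1) ∧ X.1 2 3 = -(X.1 0 1) ∧
    X.1 3 1 = X.1 2 0 ∧ X.1 3 2 = -(X.1 1 0) ∧ X.1 3 3 = -(X.1 0 0) := by
  have h : (X.1)ᵀ * Jm + Jm * X.1 = 0 := X.2
  have h' : ∀ i j, ((X.1)ᵀ * Jm + Jm * X.1) i j = 0 := by intro i j; rw [h]; rfl
  have a1 := h' 0 1
  have a2 := h' 0 2
  have a3 := h' 0 3
  have a4 := h' 1 2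
  have a5 := h' 1 3
  have a6 := h' 2 3
  simp [Jm, Matrix.mul_apply, Fin.sum_univ_four, Matrix.transpose_apply, Matrix.vecMul,
    dotProduct] at a1 a2 a3 a4 a5 a6
  refine ⟨?_, ?_, ?_, ?_, ?_, ?_⟩ <;> linarith

lemma fSp_val (i : Fin 10) : (fSp i).1 =
    (![E 0, E 2, E 3, E 5 - E 4, E 6, E 7, E 9, E 1, E 4 + E 5, E 8] : Fin 10 → _) i := by
  fin_cases i <;> rfl

set_option maxHeartbeats 2000000 in
lemma sp2_decomp (X : sp2) : X = ∑ i, crd X.1 i • fSp i := by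
  obtain ⟨h1, h2, h3, h4, h5, h6⟩ := sp2_rel X
  apply Subtype.ext
  have : (↑(∑ i, crd X.1 i • fSp i) : Matrix (Fin 4) (Fin 4) ℝ) = ∑ i, crd X.1 i • (fSp i).1 := by
    simp
  rw [this]
  simp only [fSp_val]
  ext i j
  fin_cases i <;> fin_cases j <;>
    simp [Fin.sum_univ_succ, crd, E, Emat, Pi.single_apply, Matrix.add_apply, Matrix.sub_apply,
      h1, h2, h3, h4, h5, h6] <;> ring

lemma eps_eq (ε : Fin 10 → (sp2 →ₗ[ℝ] ℝ))
    (hdual : ∀ i j : Fin 10, ε i (fSp j) = if i = j then 1 else 0) (i : Fin 10) (X : sp2) :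
    ε i X = crd X.1 i := by
  conv_lhs => rw [sp2_decomp X]
  simp [hdual]

lemma spanS_mem (z : sp2) (hz : (z : Matrix (Fin 4) (Fin 4) ℝ) ∈ spanS) :
    ∃ a b c : ℝ, z.1 = a • E 1 + b • (E 4 + E 5) + c • E 8 := by
  rw [spanS, Submodule.mem_span_triple] at hz
  obtain ⟨a, b, c, h⟩ := hz
  exact ⟨a, b, c, h.symm⟩

lemma fS_mem (i : Fin 10) (hi : 7 ≤ i) : (fSp i).1 ∈ spanS := by
  rw [fSp_val]
  apply Submodule.subset_span
  fin_cases i <;> simp at hi ⊢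

set_option maxHeartbeats 2000000 in
lemma crd_S (z : sp2) (hz : (z : Matrix (Fin 4) (Fin 4) ℝ) ∈ spanS) (i : Fin 10) (hi : i < 7) :
    crd z.1 i = 0 := by
  obtain ⟨a, b, c, h⟩ := spanS_mem z hz
  rw [h]
  fin_cases i <;> simp [crd, E, Emat, Pi.single_apply] at hi ⊢

set_option maxHeartbeats 4000000 in
lemma crd_lie (z : sp2) (hz : (z : Matrix (Fin 4) (Fin 4) ℝ) ∈ spanS) :
    ∃ a b c : ℝ, ∀ X : sp2,
      crd (⁅z, X⁆ : sp2).1 0 = a * crd X.1 2 - 2 * b * crd X.1 0 ∧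
      crd (⁅z, X⁆ : sp2).1 1 = 2 * a * crd X.1 4 - 2 * b * crd X.1 1 ∧
      crd (⁅z, X⁆ : sp2).1 2 = a * crd X.1 5 + 2 * c * crd X.1 0 ∧
      crd (⁅z, X⁆ : sp2).1 3 = 0 ∧
      crd (⁅z, X⁆ : sp2).1 4 = -2 * a * crd X.1 6 + c * crd X.1 1 ∧
      crd (⁅z, X⁆ : sp2).1 5 = 2 * b * crd X.1 5 + 2 * c * crd X.1 2 ∧
      crd (⁅z, X⁆ : sp2).1 6 = 2 * b * crd X.1 6 - c * crd X.1 4 := by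
  obtain ⟨a, b, c, h⟩ := spanS_mem z hz
  refine ⟨a, b, c, fun X => ?_⟩
  obtain ⟨h1, h2, h3, h4, h5, h6⟩ := sp2_rel X
  have hb : (⁅z, X⁆ : sp2).1 = z.1 * X.1 - X.1 * z.1 := rfl
  rw [hb, h]
  refine ⟨?_, ?_, ?_, ?_, ?_, ?_, ?_⟩ <;>
    simp [crd, E, Emat, Pi.single_apply, Matrix.mul_apply, Fin.sum_univ_four, Matrix.vecMul,
      dotProduct, h1, h2, h3, h4, h5, h6] <;> ring

lemma lie_eq (z X Y : sp2) (h : z.1 * X.1 - X.1 * z.1 = Y.1) : ⁅z, X⁆ = Y := Subtype.ext h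

set_option maxHeartbeats 4000000 in
lemma lie7 (i : Fin 7) : ⁅fSp 7, fSp (i.castLE (by norm_num))⁆ =
    (![0, 0, fSp 0, 0, (2 : ℝ) • fSp 1, fSp 2, (-2 : ℝ) • fSp 4] : Fin 7 → sp2) i := by
  apply lie_eq
  fin_cases i <;> simp [fSp_val] <;>
  · ext i j
    fin_cases i <;> fin_cases j <;>
      simp [E, Emat, Pi.single_apply, Matrix.mul_apply, Fin.sum_univ_four] <;> norm_num

set_option maxHeartbeats 4000000 in
lemma lie8 (i : Fin 7) : ⁅fSp 8, fSp (i.castLE (by norm_num))⁆ =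
    (![-2, -2, 0, 0, 0, 2, 2] : Fin 7 → ℝ) i • fSp (i.castLE (by norm_num)) := by
  apply lie_eq
  fin_cases i <;> simp [fSp_val] <;>
  · ext i j
    fin_cases i <;> fin_cases j <;>
      simp [E, Emat, Pi.single_apply, Matrix.mul_apply, Fin.sum_univ_four] <;> norm_num

/-- the wedge of three 1-forms as an alternating map -/
def tripA (α β γ : sp2 →ₗ[ℝ] ℝ) : AlternatingMap ℝ sp2 ℝ (Fin 3) :=
  (Matrix.detRowAlternating : AlternatingMap ℝ (Fin 3 → ℝ) ℝ (Fin 3)).compLinearMap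
    (LinearMap.pi ![α, β, γ])

lemma tripA_apply (α β γ : sp2 →ₗ[ℝ] ℝ) (X Y Z : sp2) :
    tripA α β γ ![X, Y, Z] = trip α β γ X Y Z := by
  have : tripA α β γ ![X, Y, Z] =
    Matrix.det (Matrix.of ![![α X, β X, γ X], ![α Y, β Y, γ Y], ![α Z, β Z, γ Z]]) := by
    change Matrix.det (n := Fin 3) (R := ℝ) _ = _
    congr 1
    ext i j
    fin_cases i <;> fin_cases j <;> rfl
  rw [this, Matrix.det_fin_three]
  simp [trip]
  ring

/-- the five basic forms -/
def psi (ε : Fin 10 → (sp2 →ₗ[ℝ] ℝ)) : Fin 5 → AlternatingMap ℝ sp2 ℝ (Fin 3) :=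
  ![(4 : ℝ) • tripA (ε 0) (ε 3) (ε 6) + tripA (ε 1) (ε 3) (ε 5) + (2 : ℝ) • tripA (ε 2) (ε 3) (ε 4),
    (2 : ℝ) • tripA (ε 0) (ε 4) (ε 5) + tripA (ε 1) (ε 2) (ε 5) - (4 : ℝ) • tripA (ε 0) (ε 2) (ε 6),
    tripA (ε 0) (ε 2) (ε 5),
    tripA (ε 1) (ε 4) (ε 5) - (4 : ℝ) • tripA (ε 0) (ε 4) (ε 6) - (2 : ℝ) • tripA (ε 1) (ε 2) (ε 6),
    tripA (ε 1) (ε 4) (ε 6)]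

/-- the right-hand side -/
def rhs (ε : Fin 10 → (sp2 →ₗ[ℝ] ℝ)) (a b q h p : ℝ) (X Y Z : sp2) : ℝ :=
          a * (4 * trip (ε 0) (ε 3) (ε 6) X Y Z + trip (ε 1) (ε 3) (ε 5) X Y Z +
            2 * trip (ε 2) (ε 3) (ε 4) X Y Z) +
          b * (2 * trip (ε 0) (ε 4) (ε 5) X Y Z + trip (ε 1) (ε 2) (ε 5) X Y Z -
            4 * trip (ε 0) (ε 2) (ε 6) X Y Z) +
          q * trip (ε 0) (ε 2) (ε 5) X Y Z +
          h * (trip (ε 1) (ε 4) (ε 5) X Y Z - 4 * trip (ε 0) (ε 4) (ε 6) X Y Z -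
            2 * trip (ε 1) (ε 2) (ε 6) X Y Z) +
          p * trip (ε 1) (ε 4) (ε 6) X Y Z

lemma psi_sum (ε : Fin 10 → (sp2 →ₗ[ℝ] ℝ)) (c : Fin 5 → ℝ) (X Y Z : sp2) :
    (∑ i, c i • psi ε i) ![X, Y, Z] = rhs ε (c 0) (c 1) (c 2) (c 3) (c 4) X Y Z := by
  simp [Fin.sum_univ_five, psi, rhs, tripA_apply]
  ring

lemma alt_ext (φ ψ : AlternatingMap ℝ sp2 ℝ (Fin 3))
    (H : ∀ i j k : Fin 10, i < j → j < k →
      φ ![fSp i, fSp j, fSp k] = ψ ![fSp i, fSp j, fSp k]) : φ = ψ := by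
  have hsp : ⊤ ≤ Submodule.span ℝ (Set.range fSp) := by
    intro X _
    rw [sp2_decomp X]
    exact Submodule.sum_mem _ fun i _ => Submodule.smul_mem _ _ (Submodule.subset_span ⟨i, rfl⟩)
  have key : ∀ v : Fin 3 → Fin 10, φ (fSp ∘ v) = ψ (fSp ∘ v) := by
    intro v
    by_cases hv : Function.Injective v
    · have hm : StrictMono (v ∘ Tuple.sort v) :=
        (Tuple.monotone_sort v).strictMono_of_injective (hv.comp (Equiv.injective _))
      have h := H _ _ _ (hm (show (0 : Fin 3) < 1 by decide)) (hm (show (1 : Fin 3) < 2 by decide))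
      have e : (![fSp ((v ∘ Tuple.sort v) 0), fSp ((v ∘ Tuple.sort v) 1),
          fSp ((v ∘ Tuple.sort v) 2)] : Fin 3 → sp2) = (fSp ∘ v) ∘ Tuple.sort v := by
        ext1 i; fin_cases i <;> rfl
      rw [e, AlternatingMap.map_perm, AlternatingMap.map_perm] at h
      exact smul_left_cancel _ h
    · have hv' : ¬ Function.Injective (fSp ∘ v) := fun h => hv h.of_comp
      rw [AlternatingMap.map_eq_zero_of_not_injective _ _ hv',
        AlternatingMap.map_eq_zero_of_not_injective _ _ hv']
  ext X
  have hX : X = fun i => ∑ j, crd (X i).1 j • fSp j := funext fun i => sp2_decomp (X i)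
  rw [hX]
  rw [← AlternatingMap.coe_multilinearMap, ← AlternatingMap.coe_multilinearMap]
  rw [MultilinearMap.map_sum, MultilinearMap.map_sum]
  refine Finset.sum_congr rfl fun r _ => ?_
  rw [MultilinearMap.map_smul_univ, MultilinearMap.map_smul_univ]
  exact congrArg _ (key r)

/-- the defining condition -/
def Cond (φ : AlternatingMap ℝ sp2 ℝ (Fin 3)) : Prop :=
      ((∀ x y z : sp2, (x : Matrix (Fin 4) (Fin 4) ℝ) ∈ spanS → φ ![x, y, z] = 0) ∧
       (∀ z x y w : sp2, (z : Matrix (Fin 4) (Fin 4) ℝ) ∈ spanS →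
         φ ![⁅z, x⁆, y, w] + φ ![x, ⁅z, y⁆, w] + φ ![x, y, ⁅z, w⁆] = 0))

set_option maxHeartbeats 4000000 in
lemma cond_of_rhs (ε : Fin 10 → (sp2 →ₗ[ℝ] ℝ))
    (hdual : ∀ i j : Fin 10, ε i (fSp j) = if i = j then 1 else 0)
    (φ : AlternatingMap ℝ sp2 ℝ (Fin 3)) (a b q h p : ℝ)
    (H : ∀ X Y Z : sp2, φ ![X, Y, Z] = rhs ε a b q h p X Y Z) : Cond φ := by
  constructor
  · intro x y z hx
    have h0 : ∀ i : Fin 10, i < 7 → ε i x = 0 := fun i hi => by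
      rw [eps_eq ε hdual, crd_S x hx i hi]
    rw [H]
    simp only [rhs, trip, h0 0 (by decide), h0 1 (by decide), h0 2 (by decide), h0 3 (by decide),
      h0 4 (by decide), h0 5 (by decide), h0 6 (by decide)]
    ring
  · intro z x y w hz
    obtain ⟨r, s, t, hl⟩ := crd_lie z hz
    simp only [← eps_eq ε hdual] at hl
    obtain ⟨x0, x1, x2, x3, x4, x5, x6⟩ := hl x
    obtain ⟨y0, y1, y2, y3, y4, y5, y6⟩ := hl y
    obtain ⟨w0, w1, w2, w3, w4, w5, w6⟩ := hl w
    simp only [H, rhs, trip, x0, x1, x2, x3, x4, x5, x6, y0, y1, y2, y3, y4, y5, y6,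
      w0, w1, w2, w3, w4, w5, w6]
    ring

lemma alt_smul0 (φ : AlternatingMap ℝ sp2 ℝ (Fin 3)) (c : ℝ) (x y z : sp2) :
    φ ![c • x, y, z] = c * φ ![x, y, z] := by
  have := φ.map_update_smul ![x, y, z] 0 c x
  have e1 : Function.update (![x, y, z] : Fin 3 → sp2) 0 (c • x) = ![c • x, y, z] := by
    ext1 i; fin_cases i <;> rfl
  have e2 : Function.update (![x, y, z] : Fin 3 → sp2) 0 x = ![x, y, z] := by
    ext1 i; fin_cases i <;> rfl
  rw [e1, e2] at this
  exact this

lemma alt_rot (φ : AlternatingMap ℝ sp2 ℝ (Fin 3)) (x y z : sp2) :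
    φ ![x, y, z] = - φ ![y, x, z] := by
  have := φ.map_swap ![y, x, z] (show (0 : Fin 3) ≠ 1 by decide)
  rw [← this]
  congr 1
  ext1 i; fin_cases i <;> rfl

lemma alt_rot' (φ : AlternatingMap ℝ sp2 ℝ (Fin 3)) (x y z : sp2) :
    φ ![x, y, z] = - φ ![z, y, x] := by
  have := φ.map_swap ![z, y, x] (show (0 : Fin 3) ≠ 2 by decide)
  rw [← this]
  congr 1
  ext1 i; fin_cases i <;> rfl

lemma alt_smul1 (φ : AlternatingMap ℝ sp2 ℝ (Fin 3)) (c : ℝ) (x y z : sp2) :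
    φ ![x, c • y, z] = c * φ ![x, y, z] := by
  rw [alt_rot, alt_smul0, alt_rot φ x y z]; ring

lemma alt_smul2 (φ : AlternatingMap ℝ sp2 ℝ (Fin 3)) (c : ℝ) (x y z : sp2) :
    φ ![x, y, c • z] = c * φ ![x, y, z] := by
  rw [alt_rot', alt_smul0, alt_rot' φ x y z]; ring

lemma wt (φ : AlternatingMap ℝ sp2 ℝ (Fin 3)) (H : Cond φ) (i j k : Fin 7)
    (h : (![-2, -2, 0, 0, 0, 2, 2] : Fin 7 → ℝ) i + (![-2, -2, 0, 0, 0, 2, 2] : Fin 7 → ℝ) j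
      + (![-2, -2, 0, 0, 0, 2, 2] : Fin 7 → ℝ) k ≠ 0) :
    φ ![fSp (i.castLE (by norm_num)), fSp (j.castLE (by norm_num)),
      fSp (k.castLE (by norm_num))] = 0 := by
  have := H.2 (fSp 8) (fSp (i.castLE (by norm_num))) (fSp (j.castLE (by norm_num)))
    (fSp (k.castLE (by norm_num))) (fS_mem 8 (by decide))
  rw [lie8, lie8, lie8, alt_smul0, alt_smul1, alt_smul2, ← add_mul, ← add_mul] at this
  exact (mul_eq_zero.1 this).resolve_left h


lemma eq7 (φ : AlternatingMap ℝ sp2 ℝ (Fin 3)) (H : Cond φ) (i j k : Fin 7) :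
    φ ![(![0, 0, fSp 0, 0, (2 : ℝ) • fSp 1, fSp 2, (-2 : ℝ) • fSp 4] : Fin 7 → sp2) i,
      fSp (j.castLE (by norm_num)), fSp (k.castLE (by norm_num))] +
    φ ![fSp (i.castLE (by norm_num)),
      (![0, 0, fSp 0, 0, (2 : ℝ) • fSp 1, fSp 2, (-2 : ℝ) • fSp 4] : Fin 7 → sp2) j,
      fSp (k.castLE (by norm_num))] +
    φ ![fSp (i.castLE (by norm_num)), fSp (j.castLE (by norm_num)),
      (![0, 0, fSp 0, 0, (2 : ℝ) • fSp 1, fSp 2, (-2 : ℝ) • fSp 4] : Fin 7 → sp2) k] = 0 := by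
  have := H.2 (fSp 7) (fSp (i.castLE (by norm_num))) (fSp (j.castLE (by norm_num)))
    (fSp (k.castLE (by norm_num))) (fS_mem 7 (by decide))
  rwa [lie7, lie7, lie7] at this

lemma alt_zero0 (φ : AlternatingMap ℝ sp2 ℝ (Fin 3)) (y z : sp2) : φ ![0, y, z] = 0 := by
  simpa using alt_smul0 φ 0 0 y z
lemma alt_zero1 (φ : AlternatingMap ℝ sp2 ℝ (Fin 3)) (y z : sp2) : φ ![y, 0, z] = 0 := by
  simpa using alt_smul1 φ 0 y 0 z
lemma alt_zero2 (φ : AlternatingMap ℝ sp2 ℝ (Fin 3)) (y z : sp2) : φ ![y, z, 0] = 0 := by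
  simpa using alt_smul2 φ 0 y z 0
lemma alt_self (φ : AlternatingMap ℝ sp2 ℝ (Fin 3)) (y z : sp2) : φ ![y, z, z] = 0 :=
  φ.map_eq_zero_of_eq _ (i := 1) (j := 2) rfl (by decide)

lemma alt_self' (φ : AlternatingMap ℝ sp2 ℝ (Fin 3)) (y z : sp2) : φ ![y, z, y] = 0 :=
  φ.map_eq_zero_of_eq _ (i := 0) (j := 2) rfl (by decide)

/-- value on basis triples -/
def TT (φ : AlternatingMap ℝ sp2 ℝ (Fin 3)) (i j k : Fin 10) : ℝ := φ ![fSp i, fSp j, fSp k]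

lemma eqs7 (φ : AlternatingMap ℝ sp2 ℝ (Fin 3)) (H : Cond φ) :
    TT φ 0 2 6 + 2 * TT φ 0 4 5 = 0 ∧ TT φ 1 2 6 + 2 * TT φ 1 4 5 = 0 ∧
    TT φ 0 3 5 = 0 ∧ TT φ 0 3 6 - 2 * TT φ 2 3 4 = 0 ∧
    TT φ 0 4 5 - 2 * TT φ 1 2 5 = 0 ∧ TT φ 0 4 6 - 2 * TT φ 1 2 6 = 0 ∧
    - 2 * TT φ 1 3 5 + TT φ 2 3 4 = 0 ∧ TT φ 1 3 6 = 0 := by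
  have a1 := eq7 φ H 0 5 6
  have a2 := eq7 φ H 1 5 6
  have a3 := eq7 φ H 2 3 5
  have a4 := eq7 φ H 2 3 6
  have a5 := eq7 φ H 2 4 5
  have a6 := eq7 φ H 2 4 6
  have a7 := eq7 φ H 3 4 5
  have a8 := eq7 φ H 3 4 6
  have r1 := alt_rot φ (fSp 2) (fSp 1) (fSp 5)
  have r2 := alt_rot φ (fSp 2) (fSp 1) (fSp 6)
  have r3 := alt_rot φ (fSp 3) (fSp 1) (fSp 5)
  have r4 := alt_rot φ (fSp 3) (fSp 1) (fSp 6)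
  have r5 := alt_rot' φ (fSp 0) (fSp 5) (fSp 4)
  have r6 := alt_rot' φ (fSp 1) (fSp 5) (fSp 4)
  have r7 := alt_rot φ (fSp 4) (fSp 5) (fSp 0)
  have r8 := alt_rot φ (fSp 4) (fSp 5) (fSp 1)
  have r9 := alt_rot' φ (fSp 5) (fSp 4) (fSp 0)
  have r10 := alt_rot' φ (fSp 5) (fSp 4) (fSp 1)
  have r11 := alt_rot φ (fSp 3) (fSp 4) (fSp 2)
  have r12 := alt_rot' φ (fSp 4) (fSp 3) (fSp 2)
  simp [-neg_smul, alt_smul0, alt_smul1, alt_smul2, alt_zero0, alt_zero1, alt_zero2, alt_self,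
    alt_self', Fin.castLE] at a1 a2 a3 a4 a5 a6 a7 a8
  simp only [TT]
  refine ⟨?_, ?_, ?_, ?_, ?_, ?_, ?_, ?_⟩ <;> linarith

lemma TT_S (φ : AlternatingMap ℝ sp2 ℝ (Fin 3)) (H : Cond φ) (i j k : Fin 10) (hk : 7 ≤ k) :
    TT φ i j k = 0 := by
  rw [TT, alt_rot', H.1 _ _ _ (fS_mem k hk), neg_zero]

lemma TT_wt (φ : AlternatingMap ℝ sp2 ℝ (Fin 3)) (H : Cond φ) :
    ∀ i j k : Fin 7,
    ((![-2, -2, 0, 0, 0, 2, 2] : Fin 7 → ℤ) i + (![-2, -2, 0, 0, 0, 2, 2] : Fin 7 → ℤ) j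
      + (![-2, -2, 0, 0, 0, 2, 2] : Fin 7 → ℤ) k ≠ 0) →
    TT φ (i.castLE (by norm_num)) (j.castLE (by norm_num)) (k.castLE (by norm_num)) = 0 := by
  intro i j k h
  have e : ∀ i : Fin 7, (![-2, -2, 0, 0, 0, 2, 2] : Fin 7 → ℝ) i =
      ((![-2, -2, 0, 0, 0, 2, 2] : Fin 7 → ℤ) i : ℝ) := by
    intro i; fin_cases i <;> simp
  refine wt φ H i j k ?_
  rw [e, e, e]
  exact_mod_cast h

/-- two solutions agreeing on five triples agree -/
lemma cond_ext (φ ψ : AlternatingMap ℝ sp2 ℝ (Fin 3)) (H : Cond φ) (H' : Cond ψ)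
    (h1 : TT φ 0 2 5 = TT ψ 0 2 5) (h2 : TT φ 1 2 5 = TT ψ 1 2 5) (h3 : TT φ 1 4 5 = TT ψ 1 4 5)
    (h4 : TT φ 1 4 6 = TT ψ 1 4 6) (h5 : TT φ 1 3 5 = TT ψ 1 3 5) : φ = ψ := by
  apply alt_ext
  intro i j k hij hjk
  change TT φ i j k = TT ψ i j k
  by_cases hk : 7 ≤ k
  · rw [TT_S φ H _ _ _ hk, TT_S ψ H' _ _ _ hk]
  obtain ⟨a1, a2, a3, a4, a5, a6, a7, a8⟩ := eqs7 φ H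
  obtain ⟨b1, b2, b3, b4, b5, b6, b7, b8⟩ := eqs7 ψ H'
  push Not at hk
  obtain ⟨k, rfl⟩ : ∃ k' : Fin 7, k = k'.castLE (by norm_num) := ⟨⟨k, hk⟩, rfl⟩
  obtain ⟨j, rfl⟩ : ∃ k' : Fin 7, j = k'.castLE (by norm_num) := ⟨⟨j, hjk.trans hk⟩, rfl⟩
  obtain ⟨i, rfl⟩ : ∃ k' : Fin 7, i = k'.castLE (by norm_num) :=
    ⟨⟨i, (hij.trans hjk).trans hk⟩, rfl⟩
  by_cases hw : ((![-2, -2, 0, 0, 0, 2, 2] : Fin 7 → ℤ) i +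
      (![-2, -2, 0, 0, 0, 2, 2] : Fin 7 → ℤ) j
      + (![-2, -2, 0, 0, 0, 2, 2] : Fin 7 → ℤ) k = 0)
  swap
  · rw [TT_wt φ H _ _ _ hw, TT_wt ψ H' _ _ _ hw]
  replace hij : i < j := hij
  replace hjk : j < k := hjk
  have cases : ∀ i j k : Fin 7, i < j → j < k → ((![-2, -2, 0, 0, 0, 2, 2] : Fin 7 → ℤ) i +
      (![-2, -2, 0, 0, 0, 2, 2] : Fin 7 → ℤ) j
      + (![-2, -2, 0, 0, 0, 2, 2] : Fin 7 → ℤ) k = 0) →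
      (i, j, k) ∈ [((0 : Fin 7), (2 : Fin 7), (5 : Fin 7)), (0, 2, 6), (0, 3, 5), (0, 3, 6),
        (0, 4, 5), (0, 4, 6), (1, 2, 5), (1, 2, 6), (1, 3, 5), (1, 3, 6), (1, 4, 5), (1, 4, 6),
        (2, 3, 4)] := by decide
  have hc := cases i j k hij hjk hw
  simp only [List.mem_cons, Prod.mk.injEq, List.not_mem_nil, or_false] at hc
  rcases hc with ⟨rfl, rfl, rfl⟩ | ⟨rfl, rfl, rfl⟩ | ⟨rfl, rfl, rfl⟩ | ⟨rfl, rfl, rfl⟩ |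
    ⟨rfl, rfl, rfl⟩ | ⟨rfl, rfl, rfl⟩ | ⟨rfl, rfl, rfl⟩ | ⟨rfl, rfl, rfl⟩ | ⟨rfl, rfl, rfl⟩ |
    ⟨rfl, rfl, rfl⟩ | ⟨rfl, rfl, rfl⟩ | ⟨rfl, rfl, rfl⟩ | ⟨rfl, rfl, rfl⟩
  · change TT φ 0 2 5 = TT ψ 0 2 5; linarith
  · change TT φ 0 2 6 = TT ψ 0 2 6; linarith
  · change TT φ 0 3 5 = TT ψ 0 3 5; linarith
  · change TT φ 0 3 6 = TT ψ 0 3 6; linarith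
  · change TT φ 0 4 5 = TT ψ 0 4 5; linarith
  · change TT φ 0 4 6 = TT ψ 0 4 6; linarith
  · change TT φ 1 2 5 = TT ψ 1 2 5; linarith
  · change TT φ 1 2 6 = TT ψ 1 2 6; linarith
  · change TT φ 1 3 5 = TT ψ 1 3 5; linarith
  · change TT φ 1 3 6 = TT ψ 1 3 6; linarith
  · change TT φ 1 4 5 = TT ψ 1 4 5; linarith
  · change TT φ 1 4 6 = TT ψ 1 4 6; linarith
  · change TT φ 2 3 4 = TT ψ 2 3 4; linarith

lemma psi_TT (ε : Fin 10 → (sp2 →ₗ[ℝ] ℝ))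
    (hdual : ∀ i j : Fin 10, ε i (fSp j) = if i = j then 1 else 0) (c : Fin 5 → ℝ) :
    TT (∑ i, c i • psi ε i) 1 3 5 = c 0 ∧ TT (∑ i, c i • psi ε i) 1 2 5 = c 1 ∧
    TT (∑ i, c i • psi ε i) 0 2 5 = c 2 ∧ TT (∑ i, c i • psi ε i) 1 4 5 = c 3 ∧
    TT (∑ i, c i • psi ε i) 1 4 6 = c 4 := by
  simp only [TT, psi_sum]
  refine ⟨?_, ?_, ?_, ?_, ?_⟩ <;> simp [rhs, trip, hdual]

lemma psi_cond (ε : Fin 10 → (sp2 →ₗ[ℝ] ℝ))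
    (hdual : ∀ i j : Fin 10, ε i (fSp j) = if i = j then 1 else 0) (c : Fin 5 → ℝ) :
    Cond (∑ i, c i • psi ε i) :=
  cond_of_rhs ε hdual _ _ _ _ _ _ (psi_sum ε c)

lemma cond_iff (ε : Fin 10 → (sp2 →ₗ[ℝ] ℝ))
    (hdual : ∀ i j : Fin 10, ε i (fSp j) = if i = j then 1 else 0)
    (φ : AlternatingMap ℝ sp2 ℝ (Fin 3)) :
    Cond φ ↔ ∃ c : Fin 5 → ℝ, ∑ i, c i • psi ε i = φ := by
  constructor
  · intro H
    refine ⟨![TT φ 1 3 5, TT φ 1 2 5, TT φ 0 2 5, TT φ 1 4 5, TT φ 1 4 6], ?_⟩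
    obtain ⟨e1, e2, e3, e4, e5⟩ := psi_TT ε hdual
      ![TT φ 1 3 5, TT φ 1 2 5, TT φ 0 2 5, TT φ 1 4 5, TT φ 1 4 6]
    exact cond_ext _ _ (psi_cond ε hdual _) H e3 e2 e4 e5 e1
  · rintro ⟨c, rfl⟩
    exact psi_cond ε hdual c

theorem statement17 (ε : Fin 10 → (sp2 →ₗ[ℝ] ℝ))
    (hdual : ∀ i j : Fin 10, ε i (fSp j) = if i = j then 1 else 0) :
    -- the equivalence, for any alternating 3-form φ on 𝔤
    (∀ φ : AlternatingMap ℝ sp2 ℝ (Fin 3),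
      ((∀ x y z : sp2, (x : Matrix (Fin 4) (Fin 4) ℝ) ∈ spanS → φ ![x, y, z] = 0) ∧
       (∀ z x y w : sp2, (z : Matrix (Fin 4) (Fin 4) ℝ) ∈ spanS →
         φ ![⁅z, x⁆, y, w] + φ ![x, ⁅z, y⁆, w] + φ ![x, y, ⁅z, w⁆] = 0)) ↔
      (∃ a b q h p : ℝ, ∀ X Y Z : sp2,
        φ ![X, Y, Z] =
          a * (4 * trip (ε 0) (ε 3) (ε 6) X Y Z + trip (ε 1) (ε 3) (ε 5) X Y Z +
            2 * trip (ε 2) (ε 3) (ε 4) X Y Z) +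
          b * (2 * trip (ε 0) (ε 4) (ε 5) X Y Z + trip (ε 1) (ε 2) (ε 5) X Y Z -
            4 * trip (ε 0) (ε 2) (ε 6) X Y Z) +
          q * trip (ε 0) (ε 2) (ε 5) X Y Z +
          h * (trip (ε 1) (ε 4) (ε 5) X Y Z - 4 * trip (ε 0) (ε 4) (ε 6) X Y Z -
            2 * trip (ε 1) (ε 2) (ε 6) X Y Z) +
          p * trip (ε 1) (ε 4) (ε 6) X Y Z)) ∧
    -- the space of such 3-forms is 5-dimensional
    (∃ W : Submodule ℝ (AlternatingMap ℝ sp2 ℝ (Fin 3)),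
      (W : Set (AlternatingMap ℝ sp2 ℝ (Fin 3))) =
        {φ | (∀ x y z : sp2, (x : Matrix (Fin 4) (Fin 4) ℝ) ∈ spanS → φ ![x, y, z] = 0) ∧
          (∀ z x y w : sp2, (z : Matrix (Fin 4) (Fin 4) ℝ) ∈ spanS →
            φ ![⁅z, x⁆, y, w] + φ ![x, ⁅z, y⁆, w] + φ ![x, y, ⁅z, w⁆] = 0)} ∧
      Module.finrank ℝ W = 5) := by
  refine ⟨fun φ => ⟨fun H => ?_, ?_⟩, ?_⟩
  · obtain ⟨c, rfl⟩ := (cond_iff ε hdual φ).1 H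
    exact ⟨c 0, c 1, c 2, c 3, c 4, psi_sum ε c⟩
  · rintro ⟨a, b, q, h, p, H⟩
    exact cond_of_rhs ε hdual φ a b q h p H
  · refine ⟨Submodule.span ℝ (Set.range (psi ε)), ?_, ?_⟩
    · ext φ
      rw [SetLike.mem_coe, Submodule.mem_span_range_iff_exists_fun]
      exact (cond_iff ε hdual φ).symm
    · have hli : LinearIndependent ℝ (psi ε) := by
        rw [Fintype.linearIndependent_iff]
        intro c hc
        obtain ⟨e1, e2, e3, e4, e5⟩ := psi_TT ε hdual c
        rw [hc] at e1 e2 e3 e4 e5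
        simp only [TT, AlternatingMap.zero_apply] at e1 e2 e3 e4 e5
        intro i
        fin_cases i
        · exact e1.symm
        · exact e2.symm
        · exact e3.symm
        · exact e4.symm
        · exact e5.symm
      rw [finrank_span_eq_card hli]
      simp
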